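/- Fix P ∈ ℝ and let V : ℝ → ℝ be continuous, 1-periodic, with min V = 0 and max V < 1. Let H̄(P) ∈ ℝ be a constant such that the equation (|P + u'(x)|² − 1)² − V(x) = H̄(P) on 𝕋 admits a continuous 1-periodic viscosity solution. For each ε > 0 let u^ε be a continuous 1-periodic viscosity solution of ε u^ε(x) + (|P + (u^ε)'(x)|² − 1)² − V(x) = 0 on 𝕋. Then there exists a continuous 1-periodic viscosity solution u⁰ of (|P + (u⁰)'(x)|² − 1)² − V(x) = H̄(P) on 𝕋 such that u^ε + H̄(P)/ε converges uniformly to u⁰ as ε → 0⁺. -/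

import Mathlib

open Filter Set
open scoped Topology

noncomputable section

/-- Viscosity subsolution of `E(x, u(x), u'(x)) = 0` on `ℝ`. -/
def ViscSub1 (E : ℝ → ℝ → ℝ → ℝ) (u : ℝ → ℝ) : Prop :=
  ∀ φ : ℝ → ℝ, ContDiff ℝ 1 φ → ∀ x₀ : ℝ, IsLocalMax (u - φ) x₀ →
    E x₀ (u x₀) (deriv φ x₀) ≤ 0

/-- Viscosity supersolution of `E(x, u(x), u'(x)) = 0` on `ℝ`. -/
def ViscSuper1 (E : ℝ → ℝ → ℝ → ℝ) (u : ℝ → ℝ) : Prop :=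
  ∀ φ : ℝ → ℝ, ContDiff ℝ 1 φ → ∀ x₀ : ℝ, IsLocalMin (u - φ) x₀ →
    0 ≤ E x₀ (u x₀) (deriv φ x₀)

/-- Viscosity solution of `E(x, u(x), u'(x)) = 0` on `ℝ`. -/
def ViscSol1 (E : ℝ → ℝ → ℝ → ℝ) (u : ℝ → ℝ) : Prop :=
  ViscSub1 E u ∧ ViscSuper1 E u

/- After the normalisation `w ε = u ε + H̄ / ε` the equation reads `ε w + H₀(P + w') = f`, with
`H₀ q = (q² - 1)²` and `f = V + H̄`, and comparison bounds the `w ε` uniformly, so it remains to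
see that their cluster points coincide. A periodic function whose superdifferential omits a slope of
the right sign keeps all its slopes on one side of that value. Hence, for `P ≥ 0`, the slopes of
`w ε` stay in one band between two branches of roots of `H₀ = s`, where `s = f - ε w` is the current
level: the inner and outer roots if `f < 1`; the outer well or, after passing to `-w`, the central
bump if `f > 0`. One of the two cases occurs since `max V - min V < 1`. Along such a band `H₀` (or
`-H₀`) is convex up to an error quadratic in the difference of levels, which is `O(ε)` here.
Therefore a convex combination of `w δ` and `w ε₀` is a subsolution at the intermediate discount
`ε`, up to an error that is small when `w δ` and `w ε₀` are close, and comparison puts it below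
`w ε`. Taking `δ, ε₀` along one convergent subsequence and `ε` along another shows that the first
limit is at most the second, and by symmetry they are equal. -/

open Function Metric

section Periodic

variable {f : ℝ → ℝ}

lemma exists_abs_le_of_periodic (hf : Continuous f) (hp : Periodic f 1) : ∃ M, ∀ x, |f x| ≤ M := by
  obtain ⟨M, hM⟩ := isBounded_iff_forall_norm_le.1 (hp.isBounded_of_continuous one_ne_zero hf)
  exact ⟨M, fun x => hM _ (mem_range_self x)⟩

lemma exists_lt_forall_le_of_periodic {c : ℝ} (hf : Continuous f) (hp : Periodic f 1)
    (hlt : ∀ x, f x < c) : ∃ m < c, ∀ x, f x ≤ m := by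
  obtain ⟨_, ⟨x, rfl⟩, hx⟩ := (hp.compact_of_continuous one_ne_zero hf).exists_isGreatest
    (range_nonempty f)
  exact ⟨f x, hlt x, fun y => hx (mem_range_self y)⟩

lemma uniformContinuous_of_periodic (hf : Continuous f) (hp : Periodic f 1) :
    UniformContinuous f := by
  have hlift : Continuous (hp.lift : AddCircle (1 : ℝ) → ℝ) := continuous_coinduced_dom.2 hf
  have hcoe : UniformContinuous ((↑) : ℝ → AddCircle (1 : ℝ)) :=
    uniformContinuous_addMonoidHom_of_continuous (f := QuotientAddGroup.mk' _)
      continuous_quotient_mk'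
  exact (CompactSpace.uniformContinuous_of_continuous hlift).comp hcoe

lemma lipschitzWith_lift_of_periodic {L : NNReal} (hf : LipschitzWith L f) (hp : Periodic f 1) :
    LipschitzWith L (hp.lift : AddCircle (1 : ℝ) → ℝ) := by
  refine LipschitzWith.of_dist_le_mul fun a b => ?_
  obtain ⟨x, rfl⟩ := QuotientAddGroup.mk_surjective a
  obtain ⟨y, rfl⟩ := QuotientAddGroup.mk_surjective b
  have hy : f (y + round (x - y)) = f y := by simpa using hp.int_mul (round (x - y)) y
  calc dist (f x) (f y) = dist (f x) (f (y + round (x - y))) := by rw [hy]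
    _ ≤ L * dist x (y + round (x - y)) := hf.dist_le_mul _ _
    _ = L * dist (x : AddCircle (1 : ℝ)) y := by
      rw [dist_eq_norm (x : AddCircle (1 : ℝ)), ← AddCircle.coe_sub, AddCircle.norm_eq,
        Real.dist_eq]
      simp [sub_sub]

lemma periodic_comp_neg (hp : Periodic f 1) : Periodic (fun x => f (-x)) 1 := fun x => by
  simp only [neg_add, ← sub_eq_add_neg, hp.sub_eq]

end Periodic

lemma hasDerivAt_sq_sub (x y : ℝ) : HasDerivAt (fun z => (z - x) ^ 2) (2 * (y - x)) y := by
  simpa using ((hasDerivAt_id' y).sub_const x).fun_pow 2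

lemma exists_isLocalMax_mem_Ioo {f : ℝ → ℝ} {a b m : ℝ} (hf : Continuous f) (hm : m ∈ Ioo a b)
    (ha : f a < f m) (hb : f b < f m) : ∃ z ∈ Ioo a b, IsLocalMax f z := by
  refine isCompact_Icc.exists_isLocalMax_mem_open Ioo_subset_Icc_self hf.continuousOn
    (Ioo_subset_Icc_self hm) (fun z hz => ?_) isOpen_Ioo
  rw [Icc_sdiff_Ioo_same (hm.1.trans hm.2).le] at hz
  rcases hz with rfl | rfl
  exacts [ha, hb]

/-- The superdifferential `D⁺u(x)`: the slopes at `x` of the `C¹` functions touching `u` from above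
there. The subdifferential is encoded as `-D⁺(-u)(x)`. -/
def superdifferential (u : ℝ → ℝ) (x : ℝ) : Set ℝ :=
  {p | ∃ φ : ℝ → ℝ, ContDiff ℝ 1 φ ∧ IsLocalMax (u - φ) x ∧ deriv φ x = p}

section Superdifferential

variable {E : ℝ → ℝ → ℝ → ℝ} {u v φ ψ a b a' b' : ℝ → ℝ} {x p θ : ℝ}

lemma viscSub1_iff : ViscSub1 E u ↔ ∀ x, ∀ p ∈ superdifferential u x, E x (u x) p ≤ 0 := by
  refine ⟨fun h x p ⟨φ, hφ, hmax, hp⟩ => hp ▸ h φ hφ x hmax,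
    fun h φ hφ x hmax => h x _ ⟨φ, hφ, hmax, rfl⟩⟩

lemma viscSuper1_iff :
    ViscSuper1 E u ↔ ∀ x, ∀ p ∈ superdifferential (-u) x, 0 ≤ E x (u x) (-p) := by
  have hneg (φ : ℝ → ℝ) (x : ℝ) : IsLocalMax (-u - φ) x ↔ IsLocalMin (u - -φ) x := by
    rw [show -u - φ = -(u - -φ) by abel]
    simp only [IsLocalMin, IsLocalMax, IsMinFilter, IsMaxFilter, Pi.neg_apply, neg_le_neg_iff]
  constructor
  · rintro h x p ⟨φ, hφ, hmax, rfl⟩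
    simpa [deriv.neg'] using h (-φ) hφ.neg x ((hneg φ x).1 hmax)
  · intro h φ hφ x hmin
    have hmax : IsLocalMax (-u - -φ) x := (hneg _ x).2 (by rwa [neg_neg])
    simpa [deriv.neg'] using h x _ ⟨-φ, hφ.neg, hmax, rfl⟩

lemma mem_superdifferential_sub_iff (hψ : ContDiff ℝ 1 ψ) :
    p ∈ superdifferential (u - ψ) x ↔ p + deriv ψ x ∈ superdifferential u x := by
  have hd {φ : ℝ → ℝ} (hφ : ContDiff ℝ 1 φ) : DifferentiableAt ℝ φ x :=
    hφ.differentiable one_ne_zero x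
  constructor
  · rintro ⟨φ, hφ, hmax, rfl⟩
    exact ⟨φ + ψ, hφ.add hψ, by rwa [sub_sub, add_comm ψ] at hmax, deriv_add (hd hφ) (hd hψ)⟩
  · rintro ⟨φ, hφ, hmax, hp⟩
    exact ⟨φ - ψ, hφ.sub hψ, by rwa [sub_sub_sub_cancel_right],
      by rw [deriv_sub (hd hφ) (hd hψ), hp, add_sub_cancel_right]⟩

lemma superdifferential_add_const (c : ℝ) :
    superdifferential (fun y => u y + c) x = superdifferential u x := by
  have hsub (φ : ℝ → ℝ) : (fun y => u y + c) - φ = fun y => (u - φ) y + c := by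
    ext y; simp only [Pi.sub_apply]; ring
  have hmax (φ : ℝ → ℝ) : IsLocalMax ((fun y => u y + c) - φ) x ↔ IsLocalMax (u - φ) x := by
    simp only [hsub, IsLocalMax, IsMaxFilter, add_le_add_iff_right]
  simp only [superdifferential, hmax]

lemma mem_superdifferential_comp_neg_iff :
    p ∈ superdifferential (fun y => u (-y)) x ↔ -p ∈ superdifferential u (-x) := by
  have key (v : ℝ → ℝ) (y q : ℝ) (hq : q ∈ superdifferential v y) :
      -q ∈ superdifferential (fun z => v (-z)) (-y) := by
    obtain ⟨φ, hφ, hmax, rfl⟩ := hq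
    refine ⟨fun z => φ (-z), hφ.comp contDiff_neg, ?_, by rw [deriv_comp_neg, neg_neg]⟩
    rw [← neg_neg y] at hmax
    exact hmax.comp_continuous (g := Neg.neg) continuous_neg.continuousAt
  exact ⟨fun h => by simpa using key _ _ _ h, fun h => by simpa using key _ _ _ h⟩

lemma dense_superdifferential_nonempty (hu : Continuous u) :
    Dense {x | (superdifferential u x).Nonempty} := by
  refine Metric.dense_iff.2 fun z r hr => ?_
  obtain ⟨K, hKl, hKr⟩ : ∃ K, u (z - r) - u z < K * r ^ 2 ∧ u (z + r) - u z < K * r ^ 2 := by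
    obtain ⟨K, hK⟩ := exists_gt (max (u (z - r) - u z) (u (z + r) - u z) / r ^ 2)
    rw [div_lt_iff₀ (by positivity), max_lt_iff] at hK
    exact ⟨K, hK⟩
  have hφ : ContDiff ℝ 1 fun y => K * (y - z) ^ 2 := by fun_prop
  obtain ⟨x, hx, hmax⟩ := exists_isLocalMax_mem_Ioo (hu.sub hφ.continuous) (a := z - r)
    (b := z + r) (m := z) (by constructor <;> linarith)
    (by simp only [Pi.sub_apply]; ring_nf; linarith)
    (by simp only [Pi.sub_apply]; ring_nf; linarith)
  exact ⟨x, by rwa [Real.ball_eq_Ioo], _, _, hφ, hmax, rfl⟩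

lemma nonpos_of_mem_superdifferential_of_antitone (hu : Antitone u)
    (hp : p ∈ superdifferential u x) : p ≤ 0 := by
  obtain ⟨φ, hφ, hmax, rfl⟩ := hp
  have hslope : Tendsto (slope φ x) (𝓝[<] x) (𝓝 (deriv φ x)) :=
    (hasDerivAt_iff_tendsto_slope.1 (hφ.differentiable one_ne_zero x).hasDerivAt).mono_left
      (nhdsWithin_mono _ fun y (hy : y < x) => hy.ne)
  refine le_of_tendsto hslope ?_
  filter_upwards [nhdsWithin_le_nhds hmax, self_mem_nhdsWithin] with y hy hyx
  have hyx : y ≤ x := le_of_lt hyx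
  simp only [Pi.sub_apply] at hy
  rw [slope_def_field]
  exact div_nonpos_of_nonneg_of_nonpos (by linarith [hu hyx]) (sub_nonpos.2 hyx)

lemma antitone_of_superdifferential_subset_Iic (hu : Continuous u)
    (h : ∀ x, superdifferential u x ⊆ Iic 0) : Antitone u := by
  refine antitone_iff_forall_lt.2 fun x y hxy => ?_
  by_contra! hlt
  set c := y + 1 - x with hc
  have hc0 : 0 < c := by linarith
  set ρ := (y - x) / c
  have hρ0 : 0 < ρ := div_pos (by linarith) hc0
  have hρ1 : ρ < 1 := (div_lt_one hc0).2 (by linarith)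
  set K := |u (y + 1) - u x| + 1
  have hK0 : 0 < K := by positivity
  obtain ⟨n, hn⟩ := exists_pow_lt_of_lt_one (div_pos (sub_pos.2 hlt) hK0) hρ1
  have hKρ : K * ρ ^ (n + 1) < u y - u x := by
    rw [lt_div_iff₀' hK0] at hn
    exact (mul_le_mul_of_nonneg_left (pow_le_pow_of_le_one hρ0.le hρ1.le n.le_succ) hK0.le).trans_lt
      hn
  -- `φ` is small at `y` but exceeds the growth of `u` at `y + 1`, so `u - φ` has an interior
  -- maximum, where `φ` has positive slope.
  set φ : ℝ → ℝ := fun z => K * ((z - x) / c) ^ (n + 1) with hφ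
  have hφc : ContDiff ℝ 1 φ := by fun_prop
  have hφx : φ x = 0 := by simp [hφ]
  have hφy : φ (y + 1) = K := by simp [hφ, ← hc, div_self hc0.ne']
  obtain ⟨z, hz, hmax⟩ := exists_isLocalMax_mem_Ioo (f := u - φ) (hu.sub hφc.continuous)
    (a := x) (b := y + 1) (m := y) ⟨hxy, by linarith⟩
    (by simp only [Pi.sub_apply, hφx, sub_zero]; linarith)
    (by simp only [Pi.sub_apply, hφy]; linarith [le_abs_self (u (y + 1) - u x)])
  have hderiv : HasDerivAt φ (K * ((n + 1 : ℕ) * ((z - x) / c) ^ n * (1 / c))) z :=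
    ((((hasDerivAt_id z).sub_const x).div_const c).pow (n + 1)).const_mul K
  have hzx : 0 < z - x := sub_pos.2 hz.1
  have hpos : 0 < deriv φ z := by rw [hderiv.deriv]; positivity
  exact hpos.not_ge (h z ⟨φ, hφc, hmax, rfl⟩)

lemma antitone_sub_iff (hu : Continuous u) (hψ : ContDiff ℝ 1 ψ) :
    Antitone (u - ψ) ↔ ∀ x, superdifferential u x ⊆ Iic (deriv ψ x) := by
  constructor
  · intro h x p hp
    rw [← sub_add_cancel p (deriv ψ x), ← mem_superdifferential_sub_iff hψ] at hp
    exact sub_nonpos.1 (nonpos_of_mem_superdifferential_of_antitone h hp)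
  · refine fun h => antitone_of_superdifferential_subset_Iic (hu.sub hψ.continuous) fun x p hp => ?_
    simpa using h x ((mem_superdifferential_sub_iff hψ).1 hp)

lemma monotone_sub_iff (hu : Continuous u) (hψ : ContDiff ℝ 1 ψ) :
    Monotone (u - ψ) ↔ ∀ x, superdifferential u x ⊆ Ici (deriv ψ x) := by
  have hcomp : Monotone (u - ψ) ↔ Antitone ((fun y => u (-y)) - fun y => ψ (-y)) :=
    ⟨fun h => h.comp_antitone fun _ _ => neg_le_neg,
      fun h x y hxy => by simpa using h (neg_le_neg hxy)⟩
  have hψ' : ContDiff ℝ 1 fun y => ψ (-y) := hψ.comp contDiff_neg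
  rw [hcomp, antitone_sub_iff (by fun_prop) hψ']
  simp only [deriv_comp_neg]
  constructor
  · intro h x p hp
    have : -p ∈ superdifferential (fun y => u (-y)) (-x) :=
      mem_superdifferential_comp_neg_iff.2 (by simpa using hp)
    simpa using h (-x) this
  · exact fun h x p hp => le_neg.1 (mem_Ici.1 (h (-x) (mem_superdifferential_comp_neg_iff.1 hp)))

lemma lipschitzWith_of_superdifferential_subset {L : NNReal} (hu : Continuous u)
    (h : ∀ x, superdifferential u x ⊆ Icc (-L) L) : LipschitzWith L u := by
  have hanti : Antitone (u - fun x => (L : ℝ) * x) :=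
    (antitone_sub_iff hu (by fun_prop)).2 fun x p hp => by simpa using (h x hp).2
  have hmono : Monotone (u - fun x => (-L : ℝ) * x) :=
    (monotone_sub_iff hu (by fun_prop)).2 fun x p hp => by simpa using (h x hp).1
  refine LipschitzWith.of_le_add_mul L fun x y => ?_
  rw [Real.dist_eq]
  rcases le_total x y with hxy | hxy
  · have := hmono hxy
    simp only [Pi.sub_apply] at this
    rw [abs_of_nonpos (sub_nonpos.2 hxy)]; linarith
  · have := hanti hxy
    simp only [Pi.sub_apply] at this
    rw [abs_of_nonneg (sub_nonneg.2 hxy)]; linarith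

lemma exists_contDiff_deriv_eq (hb : Continuous b) : ∃ ψ : ℝ → ℝ, ContDiff ℝ 1 ψ ∧ deriv ψ = b := by
  have hderiv : deriv (fun x => ∫ t in (0 : ℝ)..x, b t) = b :=
    funext fun x => hb.deriv_integral b 0 x
  refine ⟨_, contDiff_one_iff_deriv.2 ⟨fun x => ?_, by rwa [hderiv]⟩, hderiv⟩
  exact (intervalIntegral.differentiable_integral_of_continuous hb) x

-- Subtracting antiderivatives of the bounds turns the inclusions into monotonicity statements,
-- which survive nonnegative combinations.
lemma superdifferential_smul_add_smul_subset {θ' : ℝ} (hθ : 0 ≤ θ) (hθ' : 0 ≤ θ')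
    (hu : Continuous u) (hv : Continuous v) (ha : Continuous a) (hb : Continuous b)
    (ha' : Continuous a') (hb' : Continuous b')
    (hus : ∀ x, superdifferential u x ⊆ Icc (a x) (b x))
    (hvs : ∀ x, superdifferential v x ⊆ Icc (a' x) (b' x)) (x : ℝ) :
    superdifferential (θ • u + θ' • v) x ⊆ Icc (θ * a x + θ' * a' x) (θ * b x + θ' * b' x) := by
  obtain ⟨α, hα, rfl⟩ := exists_contDiff_deriv_eq ha
  obtain ⟨β, hβ, rfl⟩ := exists_contDiff_deriv_eq hb
  obtain ⟨α', hα', rfl⟩ := exists_contDiff_deriv_eq ha'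
  obtain ⟨β', hβ', rfl⟩ := exists_contDiff_deriv_eq hb'
  have hderiv {φ φ' : ℝ → ℝ} (hφ : ContDiff ℝ 1 φ) (hφ' : ContDiff ℝ 1 φ') :
      deriv (θ • φ + θ' • φ') x = θ * deriv φ x + θ' * deriv φ' x := by
    have hd := hφ.differentiable one_ne_zero x
    have hd' := hφ'.differentiable one_ne_zero x
    rw [deriv_add (hd.const_smul θ) (hd'.const_smul θ'), deriv_const_smul _ hd,
      deriv_const_smul _ hd', smul_eq_mul, smul_eq_mul]
  have hmono : Monotone (θ • u + θ' • v - (θ • α + θ' • α')) := by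
    rw [add_sub_add_comm, ← smul_sub, ← smul_sub]
    exact (((monotone_sub_iff hu hα).2 fun y _ hp => (hus y hp).1).const_smul hθ).add
      (((monotone_sub_iff hv hα').2 fun y _ hp => (hvs y hp).1).const_smul hθ')
  have hanti : Antitone (θ • u + θ' • v - (θ • β + θ' • β')) := by
    rw [add_sub_add_comm, ← smul_sub, ← smul_sub]
    exact (((antitone_sub_iff hu hβ).2 fun y _ hp => (hus y hp).2).const_smul hθ).add
      (((antitone_sub_iff hv hβ').2 fun y _ hp => (hvs y hp).2).const_smul hθ')
  intro p hp
  rw [← hderiv hα hα', ← hderiv hβ hβ']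
  have hw : Continuous (θ • u + θ' • v) := by fun_prop
  exact ⟨(monotone_sub_iff hw ((hα.const_smul θ).add (hα'.const_smul θ'))).1 hmono x hp,
    (antitone_sub_iff hw ((hβ.const_smul θ).add (hβ'.const_smul θ'))).1 hanti x hp⟩

end Superdifferential

section Barrier

variable {u W : ℝ → ℝ} {k : ℝ}

lemma monotone_of_forall_not_isLocalMax (hW : Continuous W) (hstep : ∀ x, W x ≤ W (x + 1))
    (hmax : ∀ x, ¬ IsLocalMax W x) : Monotone W := by
  refine monotone_iff_forall_lt.2 fun x y hxy => ?_
  by_contra! hlt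
  have hx : W (x - 1) ≤ W x := by simpa using hstep (x - 1)
  by_cases hbig : ∃ z ∈ Ioo (x - 1) y, W x < W z
  · obtain ⟨z, hz, hxz⟩ := hbig
    obtain ⟨m, -, hm⟩ := exists_isLocalMax_mem_Ioo hW hz (hx.trans_lt hxz) (hlt.trans hxz)
    exact hmax m hm
  · push Not at hbig
    exact hmax x (mem_of_superset (Ioo_mem_nhds (sub_one_lt x) hxy) hbig)

lemma superdifferential_subset_Ici_of_notMem (hu : Continuous u) (hp : Periodic u 1) (hk : k ≤ 0)
    (hmem : ∀ x, k ∉ superdifferential u x) (x : ℝ) : superdifferential u x ⊆ Ici k := by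
  have hφ : ContDiff ℝ 1 fun y => k * y := by fun_prop
  have hderiv (y : ℝ) : deriv (fun z => k * z) y = k := by simp
  have hmono : Monotone (u - fun y => k * y) := by
    refine monotone_of_forall_not_isLocalMax (hu.sub hφ.continuous) (fun y => ?_)
      fun y hy => hmem y ⟨_, hφ, hy, hderiv y⟩
    simp only [Pi.sub_apply, hp y]; linarith
  simpa only [hderiv] using (monotone_sub_iff hu hφ).1 hmono x

lemma superdifferential_subset_Iic_of_notMem (hu : Continuous u) (hp : Periodic u 1) (hk : 0 ≤ k)
    (hmem : ∀ x, k ∉ superdifferential u x) (x : ℝ) : superdifferential u x ⊆ Iic k := by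
  intro p hpx
  have hmem' (y : ℝ) : -k ∉ superdifferential (fun y => u (-y)) y := by
    rw [mem_superdifferential_comp_neg_iff, neg_neg]
    exact hmem (-y)
  have hpx' : -p ∈ superdifferential (fun y => u (-y)) (-x) :=
    mem_superdifferential_comp_neg_iff.2 (by simpa using hpx)
  have hle : -k ≤ -p := superdifferential_subset_Ici_of_notMem (by fun_prop) (periodic_comp_neg hp)
    (neg_nonpos.2 hk) hmem' (-x) hpx'
  exact neg_le_neg_iff.1 hle

lemma superdifferential_subset_Ici_of_neg (hu : Continuous u)
    (h : ∀ x, superdifferential (-u) x ⊆ Iic k) (x : ℝ) : superdifferential u x ⊆ Ici (-k) := by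
  have hanti : Antitone (-u - fun y => k * y) :=
    (antitone_sub_iff hu.neg (by fun_prop)).2 fun y => by simpa using h y
  have hmono : Monotone (u - fun y => -k * y) := by
    convert hanti.neg using 1
    ext y; simp only [Pi.sub_apply, Pi.neg_apply]; ring
  simpa using (monotone_sub_iff hu (by fun_prop)).1 hmono x

end Barrier

/-- The left-hand side of the discounted Hamilton-Jacobi equation `ε u + G(u') - V = 0`; for `ε = 0`
this is the ergodic equation, its constant being absorbed into `V`. -/
def discountedHJ (G V : ℝ → ℝ) (ε : ℝ) : ℝ → ℝ → ℝ → ℝ := fun x r p => ε * r + G p - V x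

/-- A continuous solution on the torus of the equation `ε u + G(u') = V`. The value `V - ε u`, which
`G(u')` takes, is called the level of `u`. -/
structure IsDiscountedSol (G V : ℝ → ℝ) (ε : ℝ) (u : ℝ → ℝ) : Prop where
  continuous : Continuous u
  periodic : Periodic u 1
  viscSol : ViscSol1 (discountedHJ G V ε) u

section Equation

variable {G V u v : ℝ → ℝ} {ε : ℝ}

lemma viscSub1_discountedHJ_iff : ViscSub1 (discountedHJ G V ε) u ↔
    ∀ x, ∀ p ∈ superdifferential u x, G p ≤ V x - ε * u x := by
  simp only [viscSub1_iff, discountedHJ, le_sub_iff_add_le', tsub_le_iff_right, zero_add]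

lemma viscSuper1_discountedHJ_iff : ViscSuper1 (discountedHJ G V ε) u ↔
    ∀ x, ∀ p ∈ superdifferential (-u) x, V x - ε * u x ≤ G (-p) := by
  simp only [viscSuper1_iff, discountedHJ, sub_nonneg, tsub_le_iff_left]

lemma exists_forall_doubling_le (hu : Continuous u) (hup : Periodic u 1) (hv : Continuous v)
    (hvp : Periodic v 1) {n : ℝ} (hn : 0 ≤ n) : ∃ x y, ∀ x' y',
      u x' - v y' - n * (x' - y') ^ 2 ≤ u x - v y - n * (x - y) ^ 2 := by
  obtain ⟨⟨x, y⟩, -, hmax⟩ := (isCompact_Icc.prod isCompact_Icc :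
    IsCompact (Icc (0 : ℝ) 1 ×ˢ Icc (-1 : ℝ) 2)).exists_isMaxOn
      ⟨(0, 0), by constructor <;> constructor <;> norm_num⟩
      (f := fun q => u q.1 - v q.2 - n * (q.1 - q.2) ^ 2) (by fun_prop)
  refine ⟨x, y, fun x' y' => ?_⟩
  set m := round (x' - y') - ⌊x'⌋ with hm
  have hux : u (Int.fract x') = u x' := by simpa using hup.sub_int_mul_eq ⌊x'⌋ (x := x')
  have hvy : v (y' + m) = v y' := by simpa using hvp.int_mul m y'
  have hsub : Int.fract x' - (y' + m) = x' - y' - round (x' - y') := by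
    rw [hm, Int.fract]; push_cast; ring
  have hround := abs_le.1 (abs_sub_round (x' - y'))
  have hmem : (Int.fract x', y' + (m : ℝ)) ∈ Icc (0 : ℝ) 1 ×ˢ Icc (-1 : ℝ) 2 := by
    have h0 := Int.fract_nonneg x'
    have h1 := Int.fract_lt_one x'
    exact ⟨⟨h0, h1.le⟩, by constructor <;> linarith⟩
  have hsq : (Int.fract x' - (y' + m)) ^ 2 ≤ (x' - y') ^ 2 := by
    rw [hsub]
    exact sq_le_sq.2 (by simpa using round_le (x' - y') 0)
  calc u x' - v y' - n * (x' - y') ^ 2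
      ≤ u (Int.fract x') - v (y' + m) - n * (Int.fract x' - (y' + m)) ^ 2 := by
        rw [hux, hvy]; gcongr
    _ ≤ u x - v y - n * (x - y) ^ 2 := hmax hmem

lemma exists_doubling_slope (hu : Continuous u) (hup : Periodic u 1) (hv : Continuous v)
    (hvp : Periodic v 1) {n : ℝ} (hn : 0 ≤ n) : ∃ x y p,
      (∀ x' y', u x' - v y' - n * (x' - y') ^ 2 ≤ u x - v y - n * (x - y) ^ 2) ∧
      p ∈ superdifferential u x ∧ -p ∈ superdifferential (-v) y := by
  obtain ⟨x, y, hmax⟩ := exists_forall_doubling_le hu hup hv hvp hn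
  refine ⟨x, y, n * (2 * (x - y)), hmax,
    ⟨fun x' => n * (x' - y) ^ 2, by fun_prop, .of_forall fun x' => ?_,
      ((hasDerivAt_sq_sub y x).const_mul n).deriv⟩,
    ⟨fun y' => n * (y' - x) ^ 2, by fun_prop, .of_forall fun y' => ?_, ?_⟩⟩
  · simp only [Pi.sub_apply]; linarith [hmax x' y]
  · have := hmax x y'
    simp only [Pi.sub_apply, Pi.neg_apply]
    rw [sub_sq_comm x, sub_sq_comm x] at this
    linarith
  · rw [((hasDerivAt_sq_sub x y).const_mul n).deriv]; ring

theorem le_of_viscSub1_of_viscSuper1 (hε : 0 < ε) (hV : UniformContinuous V)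
    (hu : Continuous u) (hup : Periodic u 1) (hv : Continuous v) (hvp : Periodic v 1)
    (hsub : ViscSub1 (discountedHJ G V ε) u) (hsuper : ViscSuper1 (discountedHJ G V ε) v) :
    u ≤ v := by
  refine fun z => le_of_forall_pos_le_add fun (κ : ℝ) hκ => ?_
  obtain ⟨M, hM⟩ := exists_abs_le_of_periodic hv hvp
  obtain ⟨δ, hδ, hVδ⟩ := Metric.uniformContinuous_iff.1 hV (ε * κ) (by positivity)
  obtain ⟨n, hn⟩ := exists_gt (max 0 (2 * M / δ ^ 2))
  rw [max_lt_iff, div_lt_iff₀ (by positivity)] at hn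
  obtain ⟨x, y, p, hmax, hpu, hpv⟩ := exists_doubling_slope hu hup hv hvp hn.1.le
  have hdiag (t : ℝ) : u t - v t ≤ u x - v y - n * (x - y) ^ 2 := by simpa using hmax t t
  have hxy : dist x y < δ := by
    have hbound : n * (x - y) ^ 2 < n * δ ^ 2 := by
      linarith [hdiag x, (abs_le.1 (hM x)).2, (abs_le.1 (hM y)).1]
    exact abs_lt_of_sq_lt_sq (lt_of_mul_lt_mul_left hbound hn.1.le) hδ.le
  have hGu : G p ≤ V x - ε * u x := viscSub1_discountedHJ_iff.1 hsub x p hpu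
  have hGv : V y - ε * v y ≤ G p := by simpa using viscSuper1_discountedHJ_iff.1 hsuper y (-p) hpv
  have hVxy := (abs_lt.1 (hVδ hxy)).2
  have hgap : u x - v y < κ := lt_of_mul_lt_mul_left (a := ε) (by linarith) hε.le
  linarith [hdiag z, mul_nonneg hn.1.le (sq_nonneg (x - y))]

end Equation

namespace IsDiscountedSol

variable {G V u v : ℝ → ℝ} {ε M x p : ℝ}

lemma apply_le_level (hu : IsDiscountedSol G V ε u) (hp : p ∈ superdifferential u x) :
    G p ≤ V x - ε * u x :=
  viscSub1_discountedHJ_iff.1 hu.viscSol.1 x p hp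

lemma level_le_apply_neg (hu : IsDiscountedSol G V ε u) (hp : p ∈ superdifferential (-u) x) :
    V x - ε * u x ≤ G (-p) :=
  viscSuper1_discountedHJ_iff.1 hu.viscSol.2 x p hp

lemma neg (hu : IsDiscountedSol G V ε u) : IsDiscountedSol (fun p => -G (-p)) (-V) ε (-u) where
  continuous := hu.continuous.neg
  periodic := hu.periodic.comp Neg.neg
  viscSol := by
    constructor
    · refine viscSub1_discountedHJ_iff.2 fun x p hp => ?_
      have := hu.level_le_apply_neg hp
      simp only [Pi.neg_apply]; linarith
    · refine viscSuper1_discountedHJ_iff.2 fun x p hp => ?_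
      rw [neg_neg] at hp ⊢
      have := hu.apply_le_level hp
      simp only [Pi.neg_apply]; linarith

lemma comp_neg (hu : IsDiscountedSol G V ε u) :
    IsDiscountedSol (fun p => G (-p)) (fun x => V (-x)) ε (fun x => u (-x)) where
  continuous := hu.continuous.comp continuous_neg
  periodic := periodic_comp_neg hu.periodic
  viscSol :=
    ⟨viscSub1_discountedHJ_iff.2 fun _ _ hp =>
      hu.apply_le_level (mem_superdifferential_comp_neg_iff.1 hp),
    viscSuper1_discountedHJ_iff.2 fun _ _ hp =>
      hu.level_le_apply_neg (mem_superdifferential_comp_neg_iff (u := -u).1 hp)⟩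

lemma add_const (hu : IsDiscountedSol G V ε u) (c : ℝ) :
    IsDiscountedSol G (fun x => V x + ε * c) ε (fun x => u x + c) where
  continuous := hu.continuous.add continuous_const
  periodic x := by simp only [hu.periodic x]
  viscSol := by
    constructor
    · refine viscSub1_discountedHJ_iff.2 fun x p hp => ?_
      rw [superdifferential_add_const] at hp
      linarith [hu.apply_le_level hp]
    · refine viscSuper1_discountedHJ_iff.2 fun x p hp => ?_
      have hneg : (-fun x => u x + c) = fun x => (-u) x + -c := by ext; simp [add_comm]
      rw [hneg, superdifferential_add_const] at hp
      linarith [hu.level_le_apply_neg hp]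

lemma le_level {c : ℝ} (hu : IsDiscountedSol G V ε u) (hV : Continuous V)
    (hG : ∀ x, ∀ p ∈ superdifferential u x, c ≤ G p) (x : ℝ) : c ≤ V x - ε * u x := by
  have hclosed : IsClosed {x | c ≤ V x - ε * u x} :=
    isClosed_le continuous_const (hV.sub (continuous_const.mul hu.continuous))
  have hsub : {x | (superdifferential u x).Nonempty} ⊆ {x | c ≤ V x - ε * u x} :=
    fun x ⟨p, hp⟩ => (hG x p hp).trans (hu.apply_le_level hp)
  exact hclosed.closure_subset_iff.2 hsub (dense_superdifferential_nonempty hu.continuous x)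

lemma le_two_mul (hu : IsDiscountedSol G V ε u) (hε : 0 < ε) (hV : UniformContinuous V)
    (hv : IsDiscountedSol G V 0 v) (hM : ∀ x, |v x| ≤ M) (x : ℝ) : u x ≤ 2 * M := by
  have hsuper : ViscSuper1 (discountedHJ G V ε) fun x => v x + M := by
    have hvM := hv.add_const M
    refine viscSuper1_discountedHJ_iff.2 fun y p hp => ?_
    have hnonneg : 0 ≤ ε * (v y + M) := mul_nonneg hε.le (by linarith [(abs_le.1 (hM y)).1])
    linarith [hvM.level_le_apply_neg hp]
  have := le_of_viscSub1_of_viscSuper1 hε hV hu.continuous hu.periodic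
    (hv.add_const M).continuous (hv.add_const M).periodic hu.viscSol.1 hsuper x
  linarith [(abs_le.1 (hM x)).2]

lemma abs_le_two_mul (hu : IsDiscountedSol G V ε u) (hε : 0 < ε) (hV : UniformContinuous V)
    (hv : IsDiscountedSol G V 0 v) (hM : ∀ x, |v x| ≤ M) (x : ℝ) : |u x| ≤ 2 * M :=
  abs_le'.2 ⟨hu.le_two_mul hε hV hv hM x,
    hu.neg.le_two_mul hε hV.neg hv.neg (fun y => by simpa using hM y) x⟩

end IsDiscountedSol

section Stability

variable {v : ℝ → ℝ}

lemma eventually_exists_mem_superdifferential {ι : Type*} {l : Filter ι} {w : ι → ℝ → ℝ} {x p : ℝ}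
    {U : Set (ℝ × ℝ)} (hw : ∀ᶠ i in l, Continuous (w i)) (hlim : TendstoUniformly w v l)
    (hp : p ∈ superdifferential v x) (hU : U ∈ 𝓝 (x, p)) :
    ∀ᶠ i in l, ∃ y q, q ∈ superdifferential (w i) y ∧ (y, q) ∈ U := by
  obtain ⟨φ, hφ, hmax, rfl⟩ := hp
  have hslope : ContinuousAt (fun y => (y, deriv φ y + 2 * (y - x))) x := by
    have := hφ.continuous_deriv le_rfl
    fun_prop
  have hnear : ∀ᶠ y in 𝓝 x, (y, deriv φ y + 2 * (y - x)) ∈ U := hslope (by simpa using hU)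
  obtain ⟨r, hr, hball⟩ := nhds_basis_closedBall.eventually_iff.1 (hnear.and hmax)
  rw [Real.closedBall_eq_Icc] at hball
  simp only [Pi.sub_apply] at hball
  -- The quadratic term makes the maximum of `v - φ` at `x` strict, so it survives perturbation.
  have hψ : ContDiff ℝ 1 fun y => φ y + (y - x) ^ 2 := by fun_prop
  filter_upwards [hw, Metric.tendstoUniformly_iff.1 hlim (r ^ 2 / 2) (by positivity)] with i hwi hi
  have hclose (y : ℝ) := abs_lt.1 (hi y)
  obtain ⟨y, hy, hmaxy⟩ := exists_isLocalMax_mem_Ioo (hwi.sub hψ.continuous) (a := x - r)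
    (b := x + r) (m := x) (by constructor <;> linarith)
    (by
      simp only [Pi.sub_apply]
      linarith [(hball ⟨le_rfl, by linarith⟩).2, (hclose x).2, (hclose (x - r)).1])
    (by
      simp only [Pi.sub_apply]
      linarith [(hball ⟨by linarith, le_rfl⟩).2, (hclose x).2, (hclose (x + r)).1])
  refine ⟨y, _, ⟨_, hψ, hmaxy, ?_⟩, (hball (Ioo_subset_Icc_self hy)).1⟩
  exact ((hφ.differentiable one_ne_zero y).hasDerivAt.add (hasDerivAt_sq_sub x y)).deriv

variable {G V : ℝ → ℝ} {w : ℝ → ℝ → ℝ}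

lemma apply_le_of_tendstoUniformly (hG : Continuous G) (hV : Continuous V)
    (hw : ∀ ε, 0 < ε → IsDiscountedSol G V ε (w ε)) (hv : Continuous v) (hvp : Periodic v 1)
    (hlim : TendstoUniformly w v (𝓝[>] 0)) {x p : ℝ} (hp : p ∈ superdifferential v x) :
    G p ≤ V x := by
  by_contra! hlt
  obtain ⟨κ, hκ0, hκ⟩ := exists_between (sub_pos.2 hlt)
  obtain ⟨M, hM⟩ := exists_abs_le_of_periodic hv hvp
  have hM0 : 0 ≤ M := (abs_nonneg _).trans (hM 0)
  have hU : {q : ℝ × ℝ | κ < G q.2 - V q.1} ∈ 𝓝 (x, p) :=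
    (isOpen_lt (by fun_prop) (by fun_prop)).mem_nhds hκ
  have hpos : ∀ᶠ ε : ℝ in 𝓝[>] 0, 0 < ε := self_mem_nhdsWithin
  have hsmall : ∀ᶠ ε : ℝ in 𝓝[>] 0, ε < κ / (M + 1) :=
    nhdsWithin_le_nhds (Iio_mem_nhds (by positivity))
  obtain ⟨ε, hε, hεκ, hclose, y, q, hq, hyq⟩ := (hpos.and (hsmall.and
    ((Metric.tendstoUniformly_iff.1 hlim 1 one_pos).and (eventually_exists_mem_superdifferential
      (hpos.mono fun ε hε => (hw ε hε).continuous) hlim hp hU)))).exists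
  rw [lt_div_iff₀ (by positivity)] at hεκ
  have hwy : -(M + 1) < w ε y := by linarith [(abs_lt.1 (hclose y)).2, (abs_le.1 (hM y)).1]
  have hyq : κ < G q - V y := hyq
  linarith [(hw ε hε).apply_le_level hq, mul_lt_mul_of_pos_left hwy hε]

theorem isDiscountedSol_of_tendstoUniformly (hG : Continuous G) (hV : Continuous V)
    (hw : ∀ ε, 0 < ε → IsDiscountedSol G V ε (w ε)) (hlim : TendstoUniformly w v (𝓝[>] 0)) :
    IsDiscountedSol G V 0 v := by
  have hpos : ∀ᶠ ε : ℝ in 𝓝[>] 0, 0 < ε := self_mem_nhdsWithin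
  have hv : Continuous v := hlim.continuous (hpos.mono fun ε hε => (hw ε hε).continuous).frequently
  have hvp : Periodic v 1 := fun x => by
    refine tendsto_nhds_unique (hlim.tendsto_at (x + 1)) ((hlim.tendsto_at x).congr' ?_)
    filter_upwards [hpos] with ε hε using ((hw ε hε).periodic x).symm
  refine ⟨hv, hvp, viscSub1_discountedHJ_iff.2 fun x p hp => ?_,
    viscSuper1_discountedHJ_iff.2 fun x p hp => ?_⟩
  · simpa using apply_le_of_tendstoUniformly hG hV hw hv hvp hlim hp
  · simpa using apply_le_of_tendstoUniformly (by fun_prop) hV.neg (fun ε hε => (hw ε hε).neg)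
      hv.neg (hvp.comp Neg.neg) hlim.neg hp

end Stability

/-- Semiconvexity of `G` along the band of slopes between the branches `a` and `b`: at a slope lying
between the interpolated branches, `G` is at most the interpolated level plus an error which is
quadratic in the difference of the levels. -/
def SemiconvexBand (C : ℝ) (G a b : ℝ → ℝ) (S : Set ℝ) : Prop :=
  ∀ s₀ ∈ S, ∀ s₁ ∈ S, ∀ θ ∈ Icc (0 : ℝ) 1,
    ∀ p ∈ Icc (θ * a s₀ + (1 - θ) * a s₁) (θ * b s₀ + (1 - θ) * b s₁),
      G p ≤ θ * s₀ + (1 - θ) * s₁ + C * (θ * (1 - θ)) * (s₀ - s₁) ^ 2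

/-- The levels `V - ε u` lie in `S`, and the slopes of `u` between the branches `a` and `b` at the
current level. -/
def SlopesInBand (a b : ℝ → ℝ) (S : Set ℝ) (V : ℝ → ℝ) (ε : ℝ) (u : ℝ → ℝ) : Prop :=
  ∀ x, V x - ε * u x ∈ S ∧
    superdifferential u x ⊆ Icc (a (V x - ε * u x)) (b (V x - ε * u x))

section Interpolation

variable {G V a b u v : ℝ → ℝ} {S : Set ℝ} {C M δ ε₀ θ η : ℝ}

lemma interpolation_error_le {A B : ℝ} (hC : 0 ≤ C) (hδ : 0 < δ) (hδε₀ : δ < ε₀)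
    (hθ : θ ∈ Icc (0 : ℝ) 1) (hA : |A| ≤ M) (hB : |B| ≤ M) (hAB : B - A ≤ η) (hη : 0 ≤ η)
    (hCM : 4 * C * M ^ 2 * ε₀ ≤ η) :
    θ * (1 - θ) * ((ε₀ - δ) * (B - A) + C * (ε₀ * A - δ * B) ^ 2) ≤
      2 * (θ * ε₀ + (1 - θ) * δ) * η := by
  obtain ⟨hθ0, hθ1⟩ := hθ
  have hε₀ : 0 < ε₀ := hδ.trans hδε₀
  have hlevel : |ε₀ * A - δ * B| ≤ 2 * M * ε₀ := by
    calc |ε₀ * A - δ * B| ≤ |ε₀ * A| + |δ * B| := abs_sub _ _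
      _ = ε₀ * |A| + δ * |B| := by rw [abs_mul, abs_mul, abs_of_pos hε₀, abs_of_pos hδ]
      _ ≤ ε₀ * M + ε₀ * M :=
        add_le_add (mul_le_mul_of_nonneg_left hA hε₀.le)
          (mul_le_mul hδε₀.le hB (abs_nonneg _) hε₀.le)
      _ = 2 * M * ε₀ := by ring
  have hquad : C * (ε₀ * A - δ * B) ^ 2 ≤ ε₀ * η := by
    calc C * (ε₀ * A - δ * B) ^ 2 ≤ C * (2 * M * ε₀) ^ 2 := by
          gcongr C * ?_
          exact sq_le_sq.2 (hlevel.trans (le_abs_self _))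
      _ = ε₀ * (4 * C * M ^ 2 * ε₀) := by ring
      _ ≤ ε₀ * η := by gcongr
  have hcross : (ε₀ - δ) * (B - A) ≤ ε₀ * η :=
    (mul_le_mul_of_nonneg_left hAB (by linarith)).trans
      (mul_le_mul_of_nonneg_right (by linarith) hη)
  have hθθ : 0 ≤ θ * (1 - θ) := mul_nonneg hθ0 (by linarith)
  have hθε : θ * (1 - θ) * ε₀ ≤ θ * ε₀ + (1 - θ) * δ := by
    nlinarith [mul_nonneg (mul_nonneg hθ0 hθ0) hε₀.le, mul_nonneg (sub_nonneg.2 hθ1) hδ.le]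
  calc θ * (1 - θ) * ((ε₀ - δ) * (B - A) + C * (ε₀ * A - δ * B) ^ 2)
      ≤ θ * (1 - θ) * (ε₀ * η + ε₀ * η) :=
        mul_le_mul_of_nonneg_left (add_le_add hcross hquad) hθθ
    _ = 2 * (θ * (1 - θ) * ε₀) * η := by ring
    _ ≤ 2 * (θ * ε₀ + (1 - θ) * δ) * η := by gcongr

lemma SemiconvexBand.viscSub1_interpolation (hband : SemiconvexBand C G a b S) (hC : 0 ≤ C)
    (hV : Continuous V) (ha : Continuous a) (hb : Continuous b) (hδ : 0 < δ) (hδε₀ : δ < ε₀)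
    (hθ : θ ∈ Icc (0 : ℝ) 1) (hu : Continuous u) (hv : Continuous v)
    (hub : SlopesInBand a b S V ε₀ u) (hvb : SlopesInBand a b S V δ v)
    (huM : ∀ x, |u x| ≤ M) (hvM : ∀ x, |v x| ≤ M) (hclose : ∀ x, v x - u x ≤ η) (hη : 0 ≤ η)
    (hCM : 4 * C * M ^ 2 * ε₀ ≤ η) :
    ViscSub1 (discountedHJ G V (θ * ε₀ + (1 - θ) * δ))
      (fun x => (θ • u + (1 - θ) • v) x + -(2 * η)) := by
  refine viscSub1_discountedHJ_iff.2 fun x p hp => ?_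
  rw [superdifferential_add_const] at hp
  have hslope := superdifferential_smul_add_smul_subset hθ.1 (sub_nonneg.2 hθ.2) hu hv
    (a := fun x => a (V x - ε₀ * u x)) (b := fun x => b (V x - ε₀ * u x))
    (a' := fun x => a (V x - δ * v x)) (b' := fun x => b (V x - δ * v x))
    (by fun_prop) (by fun_prop) (by fun_prop) (by fun_prop)
    (fun y => (hub y).2) (fun y => (hvb y).2) x hp
  have hG := hband _ (hub x).1 _ (hvb x).1 θ hθ p hslope
  have herr := interpolation_error_le hC hδ hδε₀ hθ (huM x) (hvM x) (hclose x) hη hCM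
  simp only [Pi.add_apply, Pi.smul_apply, smul_eq_mul]
  nlinarith [hG, herr]

lemma SemiconvexBand.comp_const_add (h : SemiconvexBand C G a b S) (P : ℝ) :
    SemiconvexBand C (fun p => G (P + p)) (fun s => a s - P) (fun s => b s - P) S :=
  fun s₀ h₀ s₁ h₁ θ hθ p hp => h s₀ h₀ s₁ h₁ θ hθ (P + p) ⟨by linarith [hp.1], by linarith [hp.2]⟩

end Interpolation

section Compactness

open BoundedContinuousFunction

lemma isCompact_setOf_lipschitzWith {X : Type*} [PseudoMetricSpace X] [CompactSpace X] {L : NNReal}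
    {s : Set ℝ} (hs : IsCompact s) : IsCompact {f : X →ᵇ ℝ | LipschitzWith L f ∧ ∀ x, f x ∈ s} := by
  have hLip : IsClosed {f : X →ᵇ ℝ | LipschitzWith L f} := by
    have hcoe : Continuous fun (f : X →ᵇ ℝ) x => f x := continuous_coe
    exact (isClosed_setOfPred_lipschitzWith (α := X) (β := ℝ) L).preimage hcoe
  have hmem : IsClosed {f : X →ᵇ ℝ | ∀ x, f x ∈ s} := by
    rw [ofPred_forall]
    exact isClosed_iInter fun x => hs.isClosed.preimage (continuous_eval_const x)
  exact arzela_ascoli₂ s hs _ (hLip.inter hmem) (fun f x hf => hf.2 x)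
    (LipschitzWith.uniformEquicontinuous _ L fun f => f.2.1).equicontinuous

theorem exists_tendstoUniformly_of_forall_frequently_le {ι : Type*} {l : Filter ι} [l.NeBot]
    {w : ι → ℝ → ℝ} {L : NNReal} {M : ℝ} (hw : ∀ᶠ i in l, LipschitzWith L (w i) ∧
      Periodic (w i) 1 ∧ ∀ x, |w i x| ≤ M)
    (hle : ∀ g₁ g₂ : ℝ → ℝ, (∀ η > 0, ∃ᶠ i in l, ∀ x, |w i x - g₁ x| < η) →
      (∀ η > 0, ∃ᶠ i in l, ∀ x, |w i x - g₂ x| < η) → g₁ ≤ g₂) :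
    ∃ v, TendstoUniformly w v l := by
  set K : Set (AddCircle (1 : ℝ) →ᵇ ℝ) := {f | LipschitzWith L f ∧ ∀ x, f x ∈ Icc (-M) M}
  have hK : IsCompact K := isCompact_setOf_lipschitzWith isCompact_Icc
  obtain ⟨f, hf⟩ : ∃ f : ι → AddCircle (1 : ℝ) →ᵇ ℝ, ∀ᶠ i in l,
      f i ∈ K ∧ ∀ x : ℝ, f i x = w i x := by
    refine Eventually.choice (r := fun i (f : AddCircle (1 : ℝ) →ᵇ ℝ) =>
      f ∈ K ∧ ∀ x : ℝ, f x = w i x) (hw.mono fun i ⟨hLip, hper, hM⟩ => ?_)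
    have hlift := lipschitzWith_lift_of_periodic hLip hper
    exact ⟨mkOfCompact ⟨_, hlift.continuous⟩,
      ⟨hlift, fun a => a.induction_on fun x => abs_le.1 (hM x)⟩, fun x => rfl⟩
  have hfK : ∀ᶠ i in l, f i ∈ K := hf.mono fun i hi => hi.1
  have hfreq (g) (hg : MapClusterPt g l f) (η : ℝ) (hη : 0 < η) :
      ∃ᶠ i in l, ∀ x : ℝ, |w i x - g x| < η := by
    refine ((hg.frequently (ball_mem_nhds g hη)).and_eventually hf).mono fun i ⟨hi, hi'⟩ x => ?_
    rw [← hi'.2 x]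
    exact (dist_coe_le_dist _).trans_lt hi
  have hunique (g₁ g₂) (h₁ : MapClusterPt g₁ l f) (h₂ : MapClusterPt g₂ l f) : g₁ ≤ g₂ :=
    fun a => a.induction_on fun x => hle _ _ (hfreq g₁ h₁) (hfreq g₂ h₂) x
  obtain ⟨g, -, hg⟩ := hK.exists_mapClusterPt_of_frequently hfK.frequently
  have hlim : Tendsto f l (𝓝 g) := hK.tendsto_nhds_of_unique_mapClusterPt hfK fun g' _ hg' =>
    le_antisymm (hunique g' g hg' hg) (hunique g g' hg hg')
  have hlim' := (tendsto_iff_tendstoUniformly.1 hlim).comp ((↑) : ℝ → AddCircle (1 : ℝ))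
  exact ⟨_, (tendstoUniformly_congr (hf.mono fun i hi => funext hi.2)).1 hlim'⟩

end Compactness

section Convergence

variable {G V a b : ℝ → ℝ} {S : Set ℝ} {C M : ℝ} {w : ℝ → ℝ → ℝ}

lemma SemiconvexBand.sub_le {δ ε ε₀ η : ℝ} (hband : SemiconvexBand C G a b S) (hC : 0 ≤ C)
    (hV : UniformContinuous V) (ha : Continuous a) (hb : Continuous b)
    (hw : ∀ ε, 0 < ε → IsDiscountedSol G V ε (w ε)) (hM : ∀ ε, 0 < ε → ∀ x, |w ε x| ≤ M)
    (hδ : 0 < δ) (hδε : δ < ε) (hεε₀ : ε < ε₀) (hslope₀ : SlopesInBand a b S V ε₀ (w ε₀))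
    (hslope : SlopesInBand a b S V δ (w δ)) (hclose : ∀ x, |w δ x - w ε₀ x| ≤ η)
    (hCM : 4 * C * M ^ 2 * ε₀ ≤ η) (x : ℝ) : w ε₀ x - 3 * η ≤ w ε x := by
  have hε : 0 < ε := hδ.trans hδε
  have hε₀ : 0 < ε₀ := hε.trans hεε₀
  have hη : 0 ≤ η := (abs_nonneg _).trans (hclose 0)
  obtain ⟨θ, hθ, rfl⟩ : ε ∈ (fun θ => θ * ε₀ + (1 - θ) * δ) '' Icc (0 : ℝ) 1 := by
    have hd : 0 < ε₀ - δ := by linarith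
    refine ⟨(ε - δ) / (ε₀ - δ), ⟨?_, (div_le_one hd).2 (by linarith)⟩, ?_⟩
    · exact div_nonneg (by linarith) hd.le
    · field_simp
      ring
  have hsub := hband.viscSub1_interpolation hC hV.continuous ha hb hδ (hδε.trans hεε₀) hθ
    (hw ε₀ hε₀).continuous (hw δ hδ).continuous hslope₀ hslope (hM ε₀ hε₀) (hM δ hδ)
    (fun y => (abs_le.1 (hclose y)).2) hη hCM
  have hcont : Continuous (θ • w ε₀ + (1 - θ) • w δ) :=
    ((hw ε₀ hε₀).continuous.const_smul θ).add ((hw δ hδ).continuous.const_smul _)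
  have hper : Periodic (θ • w ε₀ + (1 - θ) • w δ) 1 :=
    ((hw ε₀ hε₀).periodic.smul θ).add ((hw δ hδ).periodic.smul _)
  have hle := le_of_viscSub1_of_viscSuper1 hε hV (hcont.add continuous_const)
    (fun y => congrArg (· + -(2 * η)) (hper y)) (hw _ hε).continuous (hw _ hε).periodic hsub
    (hw _ hε).viscSol.2 x
  simp only [Pi.add_apply, Pi.smul_apply, smul_eq_mul] at hle
  nlinarith [mul_nonneg (sub_nonneg.2 hθ.2) (neg_le_iff_add_nonneg.1 (abs_le.1 (hclose x)).1),
    mul_nonneg hθ.1 hη]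

lemma SlopesInBand.lipschitzWith {L : NNReal} {ε : ℝ} {u : ℝ → ℝ} (hu : Continuous u)
    (hslope : SlopesInBand a b S V ε u) (ha : ∀ s ∈ S, |a s| ≤ L) (hb : ∀ s ∈ S, |b s| ≤ L) :
    LipschitzWith L u :=
  lipschitzWith_of_superdifferential_subset hu fun x => (hslope x).2.trans <|
    Icc_subset_Icc (abs_le.1 (ha _ (hslope x).1)).1 (abs_le.1 (hb _ (hslope x).1)).2

theorem SemiconvexBand.exists_tendstoUniformly (hband : SemiconvexBand C G a b S) (hC : 0 ≤ C)
    (hS : IsCompact S) (ha : Continuous a) (hb : Continuous b) (hV : UniformContinuous V)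
    (hw : ∀ ε, 0 < ε → IsDiscountedSol G V ε (w ε)) (hM : ∀ ε, 0 < ε → ∀ x, |w ε x| ≤ M)
    (hslope : ∀ᶠ ε in 𝓝[>] 0, SlopesInBand a b S V ε (w ε)) :
    ∃ v, TendstoUniformly w v (𝓝[>] 0) := by
  obtain ⟨A, hA⟩ := hS.exists_bound_of_continuousOn ha.continuousOn
  obtain ⟨B, hB⟩ := hS.exists_bound_of_continuousOn hb.continuousOn
  have hpos : ∀ᶠ ε : ℝ in 𝓝[>] 0, 0 < ε := self_mem_nhdsWithin
  refine exists_tendstoUniformly_of_forall_frequently_le (L := (max A B).toNNReal) (M := M) ?_ ?_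
  · filter_upwards [hpos, hslope] with ε hε hslopeε
    have hL : max A B ≤ (max A B).toNNReal := Real.le_coe_toNNReal _
    exact ⟨hslopeε.lipschitzWith (hw ε hε).continuous
      (fun s hs => (hA s hs).trans ((le_max_left A B).trans hL))
      (fun s hs => (hB s hs).trans ((le_max_right A B).trans hL)), (hw ε hε).periodic, hM ε hε⟩
  · intro g₁ g₂ h₁ h₂ x
    refine le_of_forall_pos_le_add fun (κ : ℝ) hκ => ?_
    have hη : 0 < κ / 5 := by positivity
    have hbelow {ε : ℝ} (hε : 0 < ε) : ∀ᶠ δ in 𝓝[>] 0, δ < ε :=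
      nhdsWithin_le_nhds (Iio_mem_nhds hε)
    have hsmall : ∀ᶠ ε in 𝓝[>] 0, 4 * C * M ^ 2 * ε < κ / 5 := by
      have hcont : Continuous fun ε => 4 * C * M ^ 2 * ε := by fun_prop
      exact nhdsWithin_le_nhds (hcont.continuousAt.eventually_lt_const (by simpa using hη))
    obtain ⟨ε₀, hε₀g, hε₀, hslope₀, hCM⟩ :=
      ((h₁ _ (half_pos hη)).and_eventually (hpos.and (hslope.and hsmall))).exists
    obtain ⟨ε, hεg, hε, hεε₀⟩ := ((h₂ _ hη).and_eventually (hpos.and (hbelow hε₀))).exists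
    obtain ⟨δ, hδg, hδ, hslopeδ, hδε⟩ :=
      ((h₁ _ (half_pos hη)).and_eventually (hpos.and (hslope.and (hbelow hε)))).exists
    have hclose (y : ℝ) : |w δ y - w ε₀ y| ≤ κ / 5 := by
      have h := abs_sub_lt_iff.1 (hδg y)
      have h₀ := abs_sub_lt_iff.1 (hε₀g y)
      exact abs_sub_le_iff.2 ⟨by linarith, by linarith⟩
    have hle := hband.sub_le hC hV ha hb hw hM hδ hδε hεε₀ hslope₀ hslopeδ hclose hCM.le x
    linarith [(abs_lt.1 (hε₀g x)).1, (abs_lt.1 (hεg x)).2]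

end Convergence

section DoubleWell

/-- The kinetic part of the double-well Hamiltonian. -/
def doubleWell (q : ℝ) : ℝ := (q ^ 2 - 1) ^ 2

/-- The root in `[0, 1]` of `doubleWell q = s`, for `0 ≤ s ≤ 1`. -/
def innerRoot (s : ℝ) : ℝ := √(1 - √s)

/-- The root in `[1, ∞)` of `doubleWell q = s`, for `0 ≤ s`. -/
def outerRoot (s : ℝ) : ℝ := √(1 + √s)

/-- The second divided difference of `doubleWell` at the nodes `q₀`, `q₁`, `z`, in closed form. Up
to the factor `θ (1 - θ) (q₀ - q₁) ^ 2` it is the height of the chord over `q₀`, `q₁` above the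
graph at `z = θ q₀ + (1 - θ) q₁`, so its sign decides between convexity and concavity. -/
def doubleWellDivDiff (q₀ q₁ z : ℝ) : ℝ := ((q₀ + q₁) ^ 2 + (q₀ + z) ^ 2 + (q₁ + z) ^ 2) / 2 - 2

variable {K m q q₀ q₁ r s s₀ s₁ z θ σ : ℝ}

lemma continuous_doubleWell : Continuous doubleWell := by unfold doubleWell; fun_prop

lemma continuous_innerRoot : Continuous innerRoot := by unfold innerRoot; fun_prop

lemma continuous_outerRoot : Continuous outerRoot := by unfold outerRoot; fun_prop

lemma doubleWell_nonneg (q : ℝ) : 0 ≤ doubleWell q := sq_nonneg _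

lemma doubleWell_neg (q : ℝ) : doubleWell (-q) = doubleWell q := by
  rw [doubleWell, neg_sq, doubleWell]

lemma innerRoot_nonneg (s : ℝ) : 0 ≤ innerRoot s := Real.sqrt_nonneg _

lemma innerRoot_le_one (s : ℝ) : innerRoot s ≤ 1 :=
  Real.sqrt_le_one.2 (by linarith [Real.sqrt_nonneg s])

lemma one_le_outerRoot (s : ℝ) : 1 ≤ outerRoot s :=
  Real.one_le_sqrt.2 (by linarith [Real.sqrt_nonneg s])

lemma innerRoot_pos (hs : s < 1) : 0 < innerRoot s :=
  Real.sqrt_pos.2 (sub_pos.2 ((Real.sqrt_lt' one_pos).2 (by simpa using hs)))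

lemma antitone_innerRoot : Antitone innerRoot := fun s t hst => by
  unfold innerRoot
  gcongr

lemma innerRoot_sq (hs : s ≤ 1) : innerRoot s ^ 2 = 1 - √s :=
  Real.sq_sqrt (sub_nonneg.2 (Real.sqrt_le_one.2 hs))

lemma doubleWell_innerRoot (hs : s ∈ Icc 0 1) : doubleWell (innerRoot s) = s := by
  rw [doubleWell, innerRoot_sq hs.2, sub_sub_cancel_left, neg_sq, Real.sq_sqrt hs.1]

lemma doubleWell_outerRoot (hs : 0 ≤ s) : doubleWell (outerRoot s) = s := by
  rw [doubleWell, outerRoot, Real.sq_sqrt (by positivity), add_sub_cancel_left, Real.sq_sqrt hs]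

lemma le_outerRoot_of_doubleWell_le (h : doubleWell q ≤ s) : q ≤ outerRoot s :=
  Real.le_sqrt_of_sq_le (by linarith [(abs_le.1 (Real.abs_le_sqrt h)).2])

lemma innerRoot_le_of_doubleWell_le (hq : 0 ≤ q) (h : doubleWell q ≤ s) : innerRoot s ≤ q :=
  (Real.sqrt_le_left hq).2 (by linarith [(abs_le.1 (Real.abs_le_sqrt h)).1])

lemma abs_le_innerRoot_of_le_doubleWell (hq : |q| ≤ 1) (h : s ≤ doubleWell q) :
    |q| ≤ innerRoot s := by
  have hq2 : q ^ 2 ≤ 1 := (sq_le_one_iff_abs_le_one q).2 hq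
  have hs : √s ≤ 1 - q ^ 2 :=
    (Real.sqrt_le_left (sub_nonneg.2 hq2)).2 (h.trans_eq (sub_sq_comm (q ^ 2) 1))
  exact Real.abs_le_sqrt (by linarith)

lemma doubleWell_le_of_one_le (hq : 1 ≤ q) (hr : q ≤ r) : doubleWell q ≤ doubleWell r := by
  unfold doubleWell
  have : 1 ≤ q ^ 2 := one_le_pow₀ hq
  gcongr

lemma doubleWell_le_of_abs_le (h : |q| ≤ r) (hr : r ≤ 1) : doubleWell r ≤ doubleWell q := by
  have hr2 : r ^ 2 ≤ 1 := pow_le_one₀ ((abs_nonneg q).trans h) hr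
  have hq : q ^ 2 ≤ r ^ 2 := sq_le_sq.2 (h.trans (le_abs_self r))
  unfold doubleWell
  nlinarith

lemma doubleWell_le_one (h : |q| ≤ 1) : doubleWell q ≤ 1 := by
  have hq : q ^ 2 ≤ 1 := (sq_le_one_iff_abs_le_one q).2 h
  exact (sq_le_one_iff_abs_le_one _).2 (abs_le.2 ⟨by linarith [sq_nonneg q], by linarith⟩)

lemma doubleWell_convexCombo (θ q₀ q₁ : ℝ) : doubleWell (θ * q₀ + (1 - θ) * q₁) =
    θ * doubleWell q₀ + (1 - θ) * doubleWell q₁ -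
      θ * (1 - θ) * (q₀ - q₁) ^ 2 * doubleWellDivDiff q₀ q₁ (θ * q₀ + (1 - θ) * q₁) := by
  unfold doubleWell doubleWellDivDiff; ring

lemma sq_doubleWell_sub (q₀ q₁ : ℝ) : (doubleWell q₀ - doubleWell q₁) ^ 2 =
    (q₀ - q₁) ^ 2 * ((q₀ + q₁) ^ 2 * (2 - q₀ ^ 2 - q₁ ^ 2) ^ 2) := by
  unfold doubleWell; ring

lemma doubleWell_convexCombo_le (hθ : θ ∈ Icc (0 : ℝ) 1)
    (h : -doubleWellDivDiff q₀ q₁ (θ * q₀ + (1 - θ) * q₁) ≤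
      K * ((q₀ + q₁) ^ 2 * (2 - q₀ ^ 2 - q₁ ^ 2) ^ 2)) :
    doubleWell (θ * q₀ + (1 - θ) * q₁) ≤ θ * doubleWell q₀ + (1 - θ) * doubleWell q₁ +
      K * (θ * (1 - θ)) * (doubleWell q₀ - doubleWell q₁) ^ 2 := by
  have hnonneg : 0 ≤ θ * (1 - θ) * (q₀ - q₁) ^ 2 :=
    mul_nonneg (mul_nonneg hθ.1 (sub_nonneg.2 hθ.2)) (sq_nonneg _)
  rw [doubleWell_convexCombo, sq_doubleWell_sub]
  linarith [mul_le_mul_of_nonneg_left h hnonneg]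

lemma le_doubleWell_convexCombo (hθ : θ ∈ Icc (0 : ℝ) 1)
    (h : doubleWellDivDiff q₀ q₁ (θ * q₀ + (1 - θ) * q₁) ≤
      K * ((q₀ + q₁) ^ 2 * (2 - q₀ ^ 2 - q₁ ^ 2) ^ 2)) :
    θ * doubleWell q₀ + (1 - θ) * doubleWell q₁ -
      K * (θ * (1 - θ)) * (doubleWell q₀ - doubleWell q₁) ^ 2 ≤
        doubleWell (θ * q₀ + (1 - θ) * q₁) := by
  have hnonneg : 0 ≤ θ * (1 - θ) * (q₀ - q₁) ^ 2 :=
    mul_nonneg (mul_nonneg hθ.1 (sub_nonneg.2 hθ.2)) (sq_nonneg _)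
  rw [doubleWell_convexCombo, sq_doubleWell_sub]
  linarith [mul_le_mul_of_nonneg_left h hnonneg]

lemma doubleWellDivDiff_nonneg {t : ℝ} (ht : 0 ≤ t) (ht3 : 1 ≤ 3 * t ^ 2) (h₀ : t ≤ q₀)
    (h₁ : t ≤ q₁) (hz : t ≤ z) : 0 ≤ doubleWellDivDiff q₀ q₁ z := by
  have hsq {a b : ℝ} (ha : t ≤ a) (hb : t ≤ b) : (t + t) ^ 2 ≤ (a + b) ^ 2 := by gcongr
  unfold doubleWellDivDiff
  linarith [hsq h₀ h₁, hsq h₀ hz, hsq h₁ hz]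

lemma neg_doubleWellDivDiff_le (hm : 0 < m) (h₀ : q₀ ∈ Icc m 1) (h₁ : q₁ ∈ Icc m 1)
    (hθ : θ ∈ Icc (0 : ℝ) 1) : -doubleWellDivDiff q₀ q₁ (θ * q₀ + (1 - θ) * q₁) ≤
      2 / m ^ 2 * ((q₀ + q₁) ^ 2 * (2 - q₀ ^ 2 - q₁ ^ 2) ^ 2) := by
  obtain ⟨hm₀, h₀⟩ := h₀
  obtain ⟨hm₁, h₁⟩ := h₁
  -- `doubleWell` is convex beyond its inflection point `1 / √3 < 3 / 5`.
  by_cases hlarge : 3 / 5 ≤ q₀ ∧ 3 / 5 ≤ q₁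
  · have hz : 3 / 5 ≤ θ * q₀ + (1 - θ) * q₁ :=
      convex_Ici (𝕜 := ℝ) (3 / 5 : ℝ) hlarge.1 hlarge.2 hθ.1 (sub_nonneg.2 hθ.2) (by ring)
    have := doubleWellDivDiff_nonneg (by norm_num) (by norm_num) hlarge.1 hlarge.2 hz
    exact (neg_nonpos.2 this).trans (by positivity)
  · have hgap : 1 / 2 ≤ 2 - q₀ ^ 2 - q₁ ^ 2 := by
      rcases not_and_or.1 hlarge with h | h <;> nlinarith
    calc -doubleWellDivDiff q₀ q₁ (θ * q₀ + (1 - θ) * q₁) ≤ 2 := by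
          have hnonneg (z : ℝ) : 0 ≤ ((q₀ + q₁) ^ 2 + (q₀ + z) ^ 2 + (q₁ + z) ^ 2) / 2 := by
            positivity
          unfold doubleWellDivDiff
          linarith [hnonneg (θ * q₀ + (1 - θ) * q₁)]
      _ = 2 / m ^ 2 * ((m + m) ^ 2 * (1 / 2) ^ 2) := by field_simp; norm_num
      _ ≤ 2 / m ^ 2 * ((q₀ + q₁) ^ 2 * (2 - q₀ ^ 2 - q₁ ^ 2) ^ 2) := by gcongr

lemma doubleWellDivDiff_le_of_mem_Icc {t : ℝ} (h₀ : q₀ ∈ Icc 0 t) (h₁ : q₁ ∈ Icc 0 t)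
    (hz : z ∈ Icc 0 t) : doubleWellDivDiff q₀ q₁ z ≤ 6 * t ^ 2 - 2 := by
  have hsq {a b : ℝ} (ha : a ∈ Icc 0 t) (hb : b ∈ Icc 0 t) : (a + b) ^ 2 ≤ (t + t) ^ 2 := by
    have := add_nonneg ha.1 hb.1
    gcongr
    exacts [ha.2, hb.2]
  unfold doubleWellDivDiff
  linarith [hsq h₀ h₁, hsq h₀ hz, hsq h₁ hz]

lemma doubleWellDivDiff_le (hσ : 0 < σ) (h₀ : q₀ ∈ Icc 0 1) (h₁ : q₁ ∈ Icc 0 1)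
    (hs : σ ≤ (2 - q₀ ^ 2 - q₁ ^ 2) ^ 2) (hθ : θ ∈ Icc (0 : ℝ) 1) :
    doubleWellDivDiff q₀ q₁ (θ * q₀ + (1 - θ) * q₁) ≤
      16 / σ * ((q₀ + q₁) ^ 2 * (2 - q₀ ^ 2 - q₁ ^ 2) ^ 2) := by
  have hz {t : ℝ} (ht₀ : q₀ ∈ Icc 0 t) (ht₁ : q₁ ∈ Icc 0 t) : θ * q₀ + (1 - θ) * q₁ ∈ Icc 0 t :=
    convex_Icc (𝕜 := ℝ) 0 t ht₀ ht₁ hθ.1 (sub_nonneg.2 hθ.2) (by ring)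
  -- `doubleWell` is concave between `0` and its inflection point `1 / √3 > 1 / 2`.
  by_cases hsmall : q₀ ≤ 1 / 2 ∧ q₁ ≤ 1 / 2
  · have ht₀ : q₀ ∈ Icc 0 (1 / 2) := ⟨h₀.1, hsmall.1⟩
    have ht₁ : q₁ ∈ Icc 0 (1 / 2) := ⟨h₁.1, hsmall.2⟩
    exact (doubleWellDivDiff_le_of_mem_Icc ht₀ ht₁ (hz ht₀ ht₁)).trans
      ((by norm_num : 6 * (1 / 2 : ℝ) ^ 2 - 2 ≤ 0).trans (by positivity))
  · have hsum : 1 / 2 ≤ q₀ + q₁ := by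
      rcases not_and_or.1 hsmall with h | h <;> linarith [h₀.1, h₁.1]
    calc doubleWellDivDiff q₀ q₁ (θ * q₀ + (1 - θ) * q₁) ≤ 6 * 1 ^ 2 - 2 :=
          doubleWellDivDiff_le_of_mem_Icc h₀ h₁ (hz h₀ h₁)
      _ = 16 / σ * ((1 / 2) ^ 2 * σ) := by field_simp; norm_num
      _ ≤ 16 / σ * ((q₀ + q₁) ^ 2 * (2 - q₀ ^ 2 - q₁ ^ 2) ^ 2) := by gcongr

lemma doubleWell_le_of_le_outerRoot (h₀ : 0 ≤ s₀) (h₁ : 0 ≤ s₁) (hθ : θ ∈ Icc (0 : ℝ) 1)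
    (hq : 1 ≤ q) (hle : q ≤ θ * outerRoot s₀ + (1 - θ) * outerRoot s₁) :
    doubleWell q ≤ θ * s₀ + (1 - θ) * s₁ := by
  have hconvex := doubleWell_convexCombo_le (K := 0) hθ (q₀ := outerRoot s₀) (q₁ := outerRoot s₁)
    (by
      rw [zero_mul, neg_nonpos]
      exact doubleWellDivDiff_nonneg zero_le_one (by norm_num) (one_le_outerRoot _)
        (one_le_outerRoot _) (hq.trans hle))
  rw [doubleWell_outerRoot h₀, doubleWell_outerRoot h₁] at hconvex
  linarith [doubleWell_le_of_one_le hq hle]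

lemma semiconvexBand_one_outerRoot :
    SemiconvexBand 0 doubleWell (fun _ => 1) outerRoot (Icc 0 σ) := by
  intro s₀ h₀ s₁ h₁ θ hθ q hq
  have := doubleWell_le_of_le_outerRoot h₀.1 h₁.1 hθ (by linarith [hq.1]) hq.2
  simpa using this

lemma semiconvexBand_innerRoot_outerRoot (hσ : σ < 1) :
    SemiconvexBand (2 / innerRoot σ ^ 2) doubleWell innerRoot outerRoot (Icc 0 σ) := by
  intro s₀ h₀ s₁ h₁ θ hθ q hq
  have hθ' := sub_nonneg.2 hθ.2
  rcases le_total 1 q with hq1 | hq1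
  · have := doubleWell_le_of_le_outerRoot h₀.1 h₁.1 hθ hq1 hq.2
    have herr : 0 ≤ 2 / innerRoot σ ^ 2 * (θ * (1 - θ)) * (s₀ - s₁) ^ 2 :=
      mul_nonneg (mul_nonneg (by positivity) (mul_nonneg hθ.1 hθ')) (sq_nonneg _)
    linarith
  · have hmem {s : ℝ} (hs : s ∈ Icc 0 σ) : innerRoot s ∈ Icc (innerRoot σ) 1 :=
      ⟨antitone_innerRoot hs.2, innerRoot_le_one s⟩
    have hcombo := doubleWell_convexCombo_le hθ
      (neg_doubleWellDivDiff_le (innerRoot_pos hσ) (hmem h₀) (hmem h₁) hθ)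
    rw [doubleWell_innerRoot ⟨h₀.1, h₀.2.trans hσ.le⟩,
      doubleWell_innerRoot ⟨h₁.1, h₁.2.trans hσ.le⟩] at hcombo
    have hz : 0 ≤ θ * innerRoot s₀ + (1 - θ) * innerRoot s₁ :=
      add_nonneg (mul_nonneg hθ.1 (innerRoot_nonneg _)) (mul_nonneg hθ' (innerRoot_nonneg _))
    exact (doubleWell_le_of_abs_le ((abs_of_nonneg hz).trans_le hq.1) hq1).trans hcombo

lemma semiconvexBand_neg_innerRoot (hσ : 0 < σ) :
    SemiconvexBand (16 / σ) (fun q => -doubleWell q) (fun s => -innerRoot (-s))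
      (fun s => innerRoot (-s)) (Icc (-1) (-σ)) := by
  intro s₀ h₀ s₁ h₁ θ hθ q hq
  have hθ' := sub_nonneg.2 hθ.2
  have hlevel {s : ℝ} (hs : s ∈ Icc (-1) (-σ)) : -s ∈ Icc 0 1 :=
    ⟨by linarith [hs.2], by linarith [hs.1]⟩
  have hmem (s : ℝ) : innerRoot s ∈ Icc 0 1 := ⟨innerRoot_nonneg s, innerRoot_le_one s⟩
  have hgap : σ ≤ (2 - innerRoot (-s₀) ^ 2 - innerRoot (-s₁) ^ 2) ^ 2 := by
    rw [innerRoot_sq (hlevel h₀).2, innerRoot_sq (hlevel h₁).2]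
    nlinarith [Real.sq_sqrt (hlevel h₀).1, h₀.2, Real.sqrt_nonneg (-s₀), Real.sqrt_nonneg (-s₁)]
  have hcombo := le_doubleWell_convexCombo hθ (doubleWellDivDiff_le hσ (hmem _) (hmem _) hgap hθ)
  rw [doubleWell_innerRoot (hlevel h₀), doubleWell_innerRoot (hlevel h₁)] at hcombo
  have habs : |q| ≤ θ * innerRoot (-s₀) + (1 - θ) * innerRoot (-s₁) :=
    abs_le.2 ⟨by linarith [hq.1], hq.2⟩
  have hz := convex_Icc (𝕜 := ℝ) (0 : ℝ) 1 (hmem (-s₀)) (hmem (-s₁)) hθ.1 hθ' (by ring)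
  have := doubleWell_le_of_abs_le habs hz.2
  linarith

end DoubleWell

section DoubleWellConvergence

variable {P ε M c : ℝ} {f V u : ℝ → ℝ} {w : ℝ → ℝ → ℝ}

lemma exists_lt_eventually_level_lt (hV : Continuous V) (hp : Periodic V 1) (hlt : ∀ x, V x < c)
    (hM : ∀ ε, 0 < ε → ∀ x, |w ε x| ≤ M) :
    ∃ σ < c, ∀ᶠ ε in 𝓝[>] 0, ∀ x, V x - ε * w ε x < σ := by
  obtain ⟨m, hm, hVm⟩ := exists_lt_forall_le_of_periodic hV hp hlt
  obtain ⟨σ, hmσ, hσ⟩ := exists_between hm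
  have hsmall : ∀ᶠ ε : ℝ in 𝓝[>] 0, ε * M < σ - m := by
    have hcont : Continuous fun ε : ℝ => ε * M := by fun_prop
    exact nhdsWithin_le_nhds (hcont.continuousAt.eventually_lt_const (by simpa using hmσ))
  refine ⟨σ, hσ, ?_⟩
  filter_upwards [hsmall, self_mem_nhdsWithin] with ε hεM hε x
  have hw : ε * -M ≤ ε * w ε x := mul_le_mul_of_nonneg_left (abs_le.1 (hM ε hε x)).1 (le_of_lt hε)
  linarith [hVm x]

lemma slopesInBand_of_level_lt_one {σ : ℝ} (hP : 0 ≤ P) (hf : Continuous f)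
    (hu : IsDiscountedSol (fun p => doubleWell (P + p)) f ε u) (hσ : σ < 1)
    (hlevel : ∀ x, f x - ε * u x < σ) :
    SlopesInBand (fun s => innerRoot s - P) (fun s => outerRoot s - P) (Icc 0 σ) f ε u := by
  refine fun x => ⟨⟨hu.le_level hf (fun _ _ _ => doubleWell_nonneg _) x, (hlevel x).le⟩,
    fun p hp => ?_⟩
  have hbarrier : -P ≤ p := by
    refine superdifferential_subset_Ici_of_notMem hu.continuous hu.periodic (neg_nonpos.2 hP)
      (fun y hy => ?_) x hp
    have htop : doubleWell (P + -P) = 1 := by norm_num [doubleWell]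
    linarith [hu.apply_le_level hy, hlevel y]
  have hle := hu.apply_le_level hp
  exact ⟨sub_le_iff_le_add'.2 (innerRoot_le_of_doubleWell_le (by linarith) hle),
    le_sub_iff_add_le'.2 (le_outerRoot_of_doubleWell_le hle)⟩

lemma slopesInBand_of_level_pos_of_one_le {σ : ℝ} (hP : 1 ≤ P)
    (hu : IsDiscountedSol (fun p => doubleWell (P + p)) f ε u)
    (hlevel : ∀ x, f x - ε * u x ∈ Ioc 0 σ) :
    SlopesInBand (fun _ => 1 - P) (fun s => outerRoot s - P) (Icc 0 σ) f ε u := by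
  refine fun x => ⟨Ioc_subset_Icc_self (hlevel x), fun p hp => ⟨?_, ?_⟩⟩
  · have hbarrier (y : ℝ) : P - 1 ∉ superdifferential (-u) y := fun hy => by
      have hbottom : doubleWell (P + -(P - 1)) = 0 := by norm_num [doubleWell]
      linarith [hu.level_le_apply_neg hy, (hlevel y).1]
    have hneg := superdifferential_subset_Iic_of_notMem hu.continuous.neg (hu.periodic.comp Neg.neg)
      (sub_nonneg.2 hP) hbarrier
    simpa using superdifferential_subset_Ici_of_neg hu.continuous hneg x hp
  · exact le_sub_iff_add_le'.2 (le_outerRoot_of_doubleWell_le (hu.apply_le_level hp))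

lemma slopesInBand_neg_of_level_pos {σ : ℝ} (hP : P ∈ Icc 0 1) (hf : Continuous f) (hσ : 0 ≤ σ)
    (hu : IsDiscountedSol (fun p => doubleWell (P + p)) f ε u)
    (hlevel : ∀ x, σ < f x - ε * u x) :
    SlopesInBand (fun s => -innerRoot (-s) - -P) (fun s => innerRoot (-s) - -P) (Icc (-1) (-σ))
      (-f) ε (-u) := by
  have hnotMem {k : ℝ} (hk : doubleWell (P + -k) = 0) (y : ℝ) : k ∉ superdifferential (-u) y :=
    fun hy => by linarith [hu.level_le_apply_neg hy, hlevel y]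
  have hper : Periodic (-u) 1 := hu.periodic.comp Neg.neg
  have hslope {x p : ℝ} (hp : p ∈ superdifferential (-u) x) : |P + -p| ≤ 1 := by
    have hlow : P - 1 ≤ p := superdifferential_subset_Ici_of_notMem hu.continuous.neg hper
      (sub_nonpos.2 hP.2) (hnotMem (by norm_num [doubleWell])) x hp
    have hupp : p ≤ P + 1 := superdifferential_subset_Iic_of_notMem hu.continuous.neg hper
      (add_nonneg hP.1 zero_le_one) (hnotMem (by norm_num [doubleWell])) x hp
    exact abs_le.2 ⟨by linarith, by linarith⟩
  refine fun x => ⟨⟨hu.neg.le_level hf.neg (fun y p hp => ?_) x, ?_⟩, fun p hp => ?_⟩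
  · exact neg_le_neg (doubleWell_le_one (hslope hp))
  · simp only [Pi.neg_apply]; linarith [hlevel x]
  · have := abs_le.1 (abs_le_innerRoot_of_le_doubleWell (hslope hp) (hu.level_le_apply_neg hp))
    have hneg : -((-f) x - ε * (-u) x) = f x - ε * u x := by simp only [Pi.neg_apply]; ring
    simp only [hneg]
    exact ⟨by linarith [this.2], by linarith [this.1]⟩

lemma exists_tendstoUniformly_of_lt_one (hP : 0 ≤ P) (hf : Continuous f) (hp : Periodic f 1)
    (hlt : ∀ x, f x < 1) (hw : ∀ ε, 0 < ε → IsDiscountedSol (fun p => doubleWell (P + p)) f ε (w ε))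
    (hM : ∀ ε, 0 < ε → ∀ x, |w ε x| ≤ M) : ∃ v, TendstoUniformly w v (𝓝[>] 0) := by
  obtain ⟨σ, hσ, hlevel⟩ := exists_lt_eventually_level_lt hf hp hlt hM
  refine ((semiconvexBand_innerRoot_outerRoot hσ).comp_const_add P).exists_tendstoUniformly
    (by positivity) isCompact_Icc (continuous_innerRoot.sub continuous_const)
    (continuous_outerRoot.sub continuous_const) (uniformContinuous_of_periodic hf hp) hw hM ?_
  filter_upwards [hlevel, self_mem_nhdsWithin] with ε hε hpos
  exact slopesInBand_of_level_lt_one hP hf (hw ε hpos) hσ hε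

lemma exists_pos_eventually_lt_level (hf : Continuous f) (hp : Periodic f 1) (hpos : ∀ x, 0 < f x)
    (hM : ∀ ε, 0 < ε → ∀ x, |w ε x| ≤ M) :
    ∃ σ > 0, ∀ᶠ ε in 𝓝[>] 0, ∀ x, σ < f x - ε * w ε x := by
  obtain ⟨σ, hσ, hlevel⟩ := exists_lt_eventually_level_lt (V := -f) (w := fun ε => -w ε) hf.neg
    (hp.comp Neg.neg) (fun x => neg_neg_of_pos (hpos x)) fun ε hε x => by simpa using hM ε hε x
  refine ⟨-σ, neg_pos.2 hσ, hlevel.mono fun ε hε x => ?_⟩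
  have := hε x
  simp only [Pi.neg_apply] at this
  linarith

lemma exists_tendstoUniformly_of_pos_of_one_le (hP : 1 ≤ P) (hf : Continuous f) (hp : Periodic f 1)
    (hpos : ∀ x, 0 < f x)
    (hw : ∀ ε, 0 < ε → IsDiscountedSol (fun p => doubleWell (P + p)) f ε (w ε))
    (hM : ∀ ε, 0 < ε → ∀ x, |w ε x| ≤ M) : ∃ v, TendstoUniformly w v (𝓝[>] 0) := by
  obtain ⟨A, hA⟩ := exists_abs_le_of_periodic hf hp
  obtain ⟨σ, -, hupp⟩ := exists_lt_eventually_level_lt hf hp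
    (fun x => (le_abs_self (f x)).trans_lt ((hA x).trans_lt (lt_add_one A))) hM
  obtain ⟨τ, hτ, hlow⟩ := exists_pos_eventually_lt_level hf hp hpos hM
  refine (semiconvexBand_one_outerRoot.comp_const_add P).exists_tendstoUniformly le_rfl
    (isCompact_Icc (b := σ)) continuous_const (continuous_outerRoot.sub continuous_const)
    (uniformContinuous_of_periodic hf hp) hw hM ?_
  filter_upwards [hupp, hlow, self_mem_nhdsWithin] with ε hεupp hεlow hε
  exact slopesInBand_of_level_pos_of_one_le hP (hw ε hε) fun x =>
    ⟨hτ.trans (hεlow x), (hεupp x).le⟩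

lemma exists_tendstoUniformly_of_pos_of_le_one (hP : P ∈ Icc 0 1) (hf : Continuous f)
    (hp : Periodic f 1) (hpos : ∀ x, 0 < f x)
    (hw : ∀ ε, 0 < ε → IsDiscountedSol (fun p => doubleWell (P + p)) f ε (w ε))
    (hM : ∀ ε, 0 < ε → ∀ x, |w ε x| ≤ M) : ∃ v, TendstoUniformly w v (𝓝[>] 0) := by
  obtain ⟨σ, hσ, hlevel⟩ := exists_pos_eventually_lt_level hf hp hpos hM
  have hwneg (ε : ℝ) (hε : 0 < ε) :
      IsDiscountedSol (fun p => -doubleWell (-P + p)) (-f) ε (-w ε) := by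
    convert (hw ε hε).neg using 3 with p
    rw [← doubleWell_neg, neg_add, neg_neg]
  have hcont : Continuous fun s => innerRoot (-s) := continuous_innerRoot.comp continuous_neg
  obtain ⟨v, hv⟩ := ((semiconvexBand_neg_innerRoot hσ).comp_const_add (-P)).exists_tendstoUniformly
    (w := fun ε => -w ε) (M := M) (by positivity) isCompact_Icc (hcont.neg.sub continuous_const)
    (hcont.sub continuous_const) (uniformContinuous_of_periodic hf hp).neg hwneg
    (fun ε hε x => by simpa using hM ε hε x) (by
      filter_upwards [hlevel, self_mem_nhdsWithin] with ε hεlevel hε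
      exact slopesInBand_neg_of_level_pos hP hf hσ.le (hw ε hε) hεlevel)
  exact ⟨-v, by simpa only [Pi.neg_def, neg_neg] using hv.neg⟩

theorem exists_tendstoUniformly_doubleWell (hf : Continuous f) (hp : Periodic f 1)
    (hrange : (∀ x, 0 < f x) ∨ ∀ x, f x < 1)
    (hw : ∀ ε, 0 < ε → IsDiscountedSol (fun p => doubleWell (P + p)) f ε (w ε))
    (hM : ∀ ε, 0 < ε → ∀ x, |w ε x| ≤ M) : ∃ v, TendstoUniformly w v (𝓝[>] 0) := by
  wlog hP : 0 ≤ P generalizing P f w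
  · have hw' (ε : ℝ) (hε : 0 < ε) : IsDiscountedSol (fun p => doubleWell (-P + p))
        (fun x => f (-x)) ε (fun x => w ε (-x)) := by
      convert (hw ε hε).comp_neg using 2 with p
      rw [← doubleWell_neg, neg_add, neg_neg]
    obtain ⟨v, hv⟩ := this (hf.comp continuous_neg) (periodic_comp_neg hp)
      (hrange.imp (fun h x => h (-x)) fun h x => h (-x)) hw' (fun ε hε x => hM ε hε (-x))
      (by linarith)
    exact ⟨_, by simpa [Function.comp_def] using hv.comp Neg.neg⟩
  rcases hrange with hpos | hlt
  · rcases le_total P 1 with hP1 | hP1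
    · exact exists_tendstoUniformly_of_pos_of_le_one ⟨hP, hP1⟩ hf hp hpos hw hM
    · exact exists_tendstoUniformly_of_pos_of_one_le hP1 hf hp hpos hw hM
  · exact exists_tendstoUniformly_of_lt_one hP hf hp hlt hw hM

end DoubleWellConvergence

section Ergodic

lemma discountedHJ_zero_doubleWell (P c : ℝ) (V : ℝ → ℝ) :
    discountedHJ (fun p => doubleWell (P + p)) (fun x => V x + c) 0 =
      fun x _ p => ((P + p) ^ 2 - 1) ^ 2 - V x - c := by
  funext x r p
  simp only [discountedHJ, doubleWell]
  ring

lemma forall_add_pos_or_forall_add_lt_one {V : ℝ → ℝ} {c : ℝ} (hV : Continuous V)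
    (hp : Periodic V 1)
    (hrange : sSup (range V) - sInf (range V) < 1 ∨ -sInf (range V) < c) :
    (∀ x, 0 < V x + c) ∨ ∀ x, V x + c < 1 := by
  have hcompact := hp.compact_of_continuous one_ne_zero hV
  have hinf (x : ℝ) : sInf (range V) ≤ V x := csInf_le hcompact.bddBelow (mem_range_self x)
  have hsup (x : ℝ) : V x ≤ sSup (range V) := le_csSup hcompact.bddAbove (mem_range_self x)
  by_cases hpos : ∀ x, 0 < V x + c
  · exact Or.inl hpos
  · push Not at hpos
    obtain ⟨x₀, hx₀⟩ := hpos
    have hosc : sSup (range V) - sInf (range V) < 1 :=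
      hrange.resolve_right fun hc => by linarith [hinf x₀]
    exact Or.inr fun x => by linarith [hsup x, hinf x₀]

end Ergodic

theorem stmt5_general (P : ℝ) (V : ℝ → ℝ) (hVcont : Continuous V) (hVper : Periodic V 1) (Hbar : ℝ)
    (hrange : sSup (range V) - sInf (range V) < 1 ∨ -sInf (range V) < Hbar)
    (hHbar : ∃ w : ℝ → ℝ, Continuous w ∧ Periodic w 1 ∧
      ViscSol1 (fun x _ p => ((P + p) ^ 2 - 1) ^ 2 - V x - Hbar) w)
    (u : ℝ → ℝ → ℝ)
    (hu : ∀ ε : ℝ, 0 < ε → Continuous (u ε) ∧ Periodic (u ε) 1 ∧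
      ViscSol1 (fun x r p => ε * r + ((P + p) ^ 2 - 1) ^ 2 - V x) (u ε)) :
    ∃ u0 : ℝ → ℝ, Continuous u0 ∧ Periodic u0 1 ∧
      ViscSol1 (fun x _ p => ((P + p) ^ 2 - 1) ^ 2 - V x - Hbar) u0 ∧
      TendstoUniformly (fun ε x => u ε x + Hbar / ε) u0 (𝓝[>] (0 : ℝ)) := by
  rw [← discountedHJ_zero_doubleWell] at hHbar ⊢
  obtain ⟨v₀, hcont, hper, hsol⟩ := hHbar
  have hv₀ := IsDiscountedSol.mk hcont hper hsol
  have hf : Continuous fun x => V x + Hbar := hVcont.add continuous_const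
  have hfper : Periodic (fun x => V x + Hbar) 1 := fun x => congrArg (· + Hbar) (hVper x)
  have hw (ε : ℝ) (hε : 0 < ε) : IsDiscountedSol (fun p => doubleWell (P + p))
      (fun x => V x + Hbar) ε (fun x => u ε x + Hbar / ε) := by
    obtain ⟨hcont, hper, hsol⟩ := hu ε hε
    have huε : IsDiscountedSol (fun p => doubleWell (P + p)) V ε (u ε) := ⟨hcont, hper, hsol⟩
    simpa only [mul_div_cancel₀ _ hε.ne'] using huε.add_const (Hbar / ε)
  obtain ⟨M, hM⟩ := exists_abs_le_of_periodic hcont hper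
  obtain ⟨v, hv⟩ := exists_tendstoUniformly_doubleWell hf hfper
    (forall_add_pos_or_forall_add_lt_one hVcont hVper hrange) hw fun ε hε =>
      (hw ε hε).abs_le_two_mul hε (uniformContinuous_of_periodic hf hfper) hv₀ hM
  have hdoubleWell : Continuous fun p => doubleWell (P + p) :=
    continuous_doubleWell.comp (continuous_const_add P)
  have hvsol := isDiscountedSol_of_tendstoUniformly hdoubleWell hf hw hv
  exact ⟨v, hvsol.continuous, hvsol.periodic, hvsol.viscSol, hv⟩

theorem stmt5 (P : ℝ) (V : ℝ → ℝ) (hVcont : Continuous V) (hVper : Function.Periodic V 1)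
    (hVmin : sInf (Set.range V) = 0) (hVmax : sSup (Set.range V) < 1)
    (Hbar : ℝ)
    -- H̄(P) is such that the ergodic equation has a continuous 1-periodic viscosity solution
    (hHbar : ∃ w : ℝ → ℝ, Continuous w ∧ Function.Periodic w 1 ∧
      ViscSol1 (fun x _ p => ((P + p) ^ 2 - 1) ^ 2 - V x - Hbar) w)
    -- for each ε > 0, u ε is a continuous 1-periodic viscosity solution of the discounted problem
    (u : ℝ → ℝ → ℝ)
    (hu : ∀ ε : ℝ, 0 < ε → Continuous (u ε) ∧ Function.Periodic (u ε) 1 ∧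
      ViscSol1 (fun x r p => ε * r + ((P + p) ^ 2 - 1) ^ 2 - V x) (u ε)) :
    ∃ u0 : ℝ → ℝ, Continuous u0 ∧ Function.Periodic u0 1 ∧
      ViscSol1 (fun x _ p => ((P + p) ^ 2 - 1) ^ 2 - V x - Hbar) u0 ∧
      TendstoUniformly (fun ε x => u ε x + Hbar / ε) u0 (𝓝[>] (0 : ℝ)) :=
  stmt5_general P V hVcont hVper Hbar (Or.inl (by rwa [hVmin, sub_zero])) hHbar u hu
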